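/- arXiv:2605.26670 — 6 statements merged into one kernel-verified Lean document; each statement's English description precedes it below -/
import Mathlib

section
/- Let W ∈ ℝ^{d_o×d_i}, K₀ ∈ ℝ^{d_i×m₀}, K_new ∈ ℝ^{d_i×m}, V_new ∈ ℝ^{d_o×m}, and set V₀ := W K₀. Assume the symmetric positive semidefinite matrix K₀K₀ᵀ + K_new K_newᵀ is invertible. Then the matrix Δ* := (V_new − W K_new) K_newᵀ (K₀K₀ᵀ + K_new K_newᵀ)⁻¹ is the unique minimizer over Δ ∈ ℝ^{d_o×d_i} of the objective Δ ↦ ‖(W + Δ)[K₀ | K_new] − [V₀ | V_new]‖_F². -/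
open Matrix BigOperators

noncomputable section

/-- Squared Frobenius norm of a real matrix. -/
def frobSq {n m : Type*} [Fintype n] [Fintype m] (A : Matrix n m ℝ) : ℝ :=
  ∑ i, ∑ j, (A i j) ^ 2

/-! The residual `(W + Δ)K - V` is affine in `Δ`. At `Δ*` the normal equations make it orthogonal
to every matrix `DK`, so by Pythagoras the objective at `Δ` exceeds its minimum by exactly
`‖(Δ - Δ*)K‖²`, which vanishes only at `Δ = Δ*` because `K` has a right inverse. The block problem
is the case `K = [K₀ | K_new]`, `V = [W K₀ | V_new]`, whose residual at `Δ = 0` has zero first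
block. -/

section BlockColumns

variable {R l n m₁ m₂ : Type*} [Semiring R] [Fintype m₁] [Fintype m₂]

theorem fromCols_mul_transpose_fromCols (A₁ : Matrix l m₁ R) (A₂ : Matrix l m₂ R)
    (B₁ : Matrix n m₁ R) (B₂ : Matrix n m₂ R) :
    fromCols A₁ A₂ * (fromCols B₁ B₂)ᵀ = A₁ * B₁ᵀ + A₂ * B₂ᵀ := by
  rw [transpose_fromCols, fromCols_mul_fromRows]

end BlockColumns

section FrobSq

variable {n m : Type*} [Fintype n] [Fintype m]

theorem frobSq_eq_trace (A : Matrix n m ℝ) : frobSq A = (A * Aᵀ).trace := by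
  simp only [frobSq, trace, diag_apply, mul_apply, transpose_apply, sq]

theorem frobSq_nonneg (A : Matrix n m ℝ) : 0 ≤ frobSq A :=
  Finset.sum_nonneg fun _ _ => Finset.sum_nonneg fun _ _ => sq_nonneg _

theorem frobSq_eq_zero_iff {A : Matrix n m ℝ} : frobSq A = 0 ↔ A = 0 := by
  rw [frobSq_eq_trace, ← conjTranspose_eq_transpose_of_trivial,
    trace_mul_conjTranspose_self_eq_zero_iff]

theorem frobSq_add (A B : Matrix n m ℝ) :
    frobSq (A + B) = frobSq A + 2 * (A * Bᵀ).trace + frobSq B := by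
  have trace_swap : (B * Aᵀ).trace = (A * Bᵀ).trace := by
    rw [← trace_transpose, transpose_mul, transpose_transpose]
  simp only [frobSq_eq_trace, transpose_add, Matrix.add_mul, Matrix.mul_add, trace_add, trace_swap]
  ring

theorem frobSq_mul_sub_of_normal_eq {k : Type*} [Fintype k] {S : Matrix n k ℝ}
    {K : Matrix k m ℝ} {V : Matrix n m ℝ} (h : (S * K - V) * Kᵀ = 0) (X : Matrix n k ℝ) :
    frobSq (X * K - V) = frobSq (S * K - V) + frobSq ((X - S) * K) := by
  have orthogonal : (S * K - V) * ((X - S) * K)ᵀ = 0 := by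
    rw [transpose_mul, ← Matrix.mul_assoc, h, Matrix.zero_mul]
  have split : X * K - V = (S * K - V) + (X - S) * K := by
    rw [Matrix.sub_mul]
    abel
  rw [split, frobSq_add, orthogonal, trace_zero, mul_zero, add_zero]

end FrobSq

section LeastSquares

variable {R n k m : Type*} [CommRing R] [Fintype k] [DecidableEq k] [Fintype m]

/-- The least-squares correction of a weight matrix `W` for keys `K` and target values `V`, i.e.
the solution `Δ` of the normal equations `((W + Δ)K - V)Kᵀ = 0`. Meaningful only for invertible
`K * Kᵀ`, since otherwise `(K * Kᵀ)⁻¹ = 0`. -/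
def leastSquaresCorrection (W : Matrix n k R) (K : Matrix k m R) (V : Matrix n m R) :
    Matrix n k R :=
  (V - W * K) * Kᵀ * (K * Kᵀ)⁻¹

theorem leastSquaresCorrection_normal_eq (W : Matrix n k R) {K : Matrix k m R} (V : Matrix n m R)
    (hK : IsUnit (K * Kᵀ)) :
    ((W + leastSquaresCorrection W K V) * K - V) * Kᵀ = 0 := by
  have gram : leastSquaresCorrection W K V * (K * Kᵀ) = (V - W * K) * Kᵀ :=
    nonsing_inv_mul_cancel_right _ _ ((isUnit_iff_isUnit_det _).1 hK)
  rw [Matrix.sub_mul, Matrix.mul_assoc, Matrix.add_mul, gram, Matrix.sub_mul, Matrix.mul_assoc]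
  abel

theorem mul_left_injective_of_isUnit_mul_transpose {K : Matrix k m R} (hK : IsUnit (K * Kᵀ)) :
    Function.Injective fun X : Matrix n k R => X * K := by
  refine mul_left_injective_of_inv K (Kᵀ * (K * Kᵀ)⁻¹) ?_
  rw [← Matrix.mul_assoc, mul_nonsing_inv _ ((isUnit_iff_isUnit_det _).1 hK)]

theorem leastSquaresCorrection_fromCols {m₀ : Type*} [Fintype m₀] (W : Matrix n k R)
    (K₀ : Matrix k m₀ R) (K : Matrix k m R) (V : Matrix n m R) :
    leastSquaresCorrection W (fromCols K₀ K) (fromCols (W * K₀) V) =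
      (V - W * K) * Kᵀ * (K₀ * K₀ᵀ + K * Kᵀ)⁻¹ := by
  simp only [leastSquaresCorrection, Matrix.sub_mul, mul_fromCols, fromCols_mul_transpose_fromCols,
    add_sub_add_left_eq_sub]

theorem one_time_edit_unique_minimizer_general [Fintype n] (W : Matrix n k ℝ) (K : Matrix k m ℝ)
    (V : Matrix n m ℝ) (hK : IsUnit (K * Kᵀ)) :
    (∀ Δ, frobSq ((W + leastSquaresCorrection W K V) * K - V) ≤ frobSq ((W + Δ) * K - V)) ∧
      ∀ Δ, frobSq ((W + Δ) * K - V) ≤ frobSq ((W + leastSquaresCorrection W K V) * K - V) →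
        Δ = leastSquaresCorrection W K V := by
  set Δstar := leastSquaresCorrection W K V
  have excess (Δ : Matrix n k ℝ) : frobSq ((W + Δ) * K - V) =
      frobSq ((W + Δstar) * K - V) + frobSq ((Δ - Δstar) * K) := by
    rw [frobSq_mul_sub_of_normal_eq (leastSquaresCorrection_normal_eq W V hK),
      add_sub_add_left_eq_sub]
  refine ⟨fun Δ => ?_, fun Δ hΔ => ?_⟩
  · rw [excess Δ]
    exact le_add_of_nonneg_right (frobSq_nonneg _)
  · rw [excess Δ, add_le_iff_nonpos_right] at hΔ
    have excess_zero : (Δ - Δstar) * K = 0 :=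
      frobSq_eq_zero_iff.1 (hΔ.antisymm (frobSq_nonneg _))
    refine mul_left_injective_of_isUnit_mul_transpose hK (sub_eq_zero.1 ?_)
    rwa [← Matrix.sub_mul]

end LeastSquares

theorem one_time_edit_unique_minimizer
    {dOut dIn m₀ m : ℕ}
    (W : Matrix (Fin dOut) (Fin dIn) ℝ)
    (K₀ : Matrix (Fin dIn) (Fin m₀) ℝ)
    (Knew : Matrix (Fin dIn) (Fin m) ℝ)
    (Vnew : Matrix (Fin dOut) (Fin m) ℝ)
    (hinv : Invertible (K₀ * K₀ᵀ + Knew * Knewᵀ)) :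
    let V₀ : Matrix (Fin dOut) (Fin m₀) ℝ := W * K₀
    let Δstar : Matrix (Fin dOut) (Fin dIn) ℝ :=
      (Vnew - W * Knew) * Knewᵀ * (K₀ * K₀ᵀ + Knew * Knewᵀ)⁻¹
    let f : Matrix (Fin dOut) (Fin dIn) ℝ → ℝ := fun Δ =>
      frobSq ((W + Δ) * Matrix.fromCols K₀ Knew - Matrix.fromCols V₀ Vnew)
    (∀ Δ, f Δstar ≤ f Δ) ∧ (∀ Δ, f Δ ≤ f Δstar → Δ = Δstar) := by
  simpa only [leastSquaresCorrection_fromCols] using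
    one_time_edit_unique_minimizer_general W (fromCols K₀ Knew) (fromCols (W * K₀) Vnew)
      (fromCols_mul_transpose_fromCols K₀ Knew K₀ Knew ▸ isUnit_of_invertible _)
end
end

section
/- Fix W₀ ∈ ℝ^{d_o×d_i}, a matrix P ∈ ℝ^{d_i×d_i}, and for each step τ = 1, …, t matrices K_τ ∈ ℝ^{d_i×m_τ} and V_τ ∈ ℝ^{d_o×m_τ}. Assume for every s with 1 ≤ s ≤ t that the matrix (∑_{τ=1}^{s} K_τ K_τᵀ) P + I is invertible. Define sequential updates recursively by W_s = W_{s−1} + Δ_s* where Δ_s* := (V_s − W_{s−1} K_s) K_sᵀ P ((∑_{τ=1}^{s} K_τ K_τᵀ) P + I)⁻¹. Let R′_τ := V_τ − W₀ K_τ and define the batch (one-time editing) update Δ_{total,t}* := (∑_{τ=1}^{t} R′_τ K_τᵀ P) ((∑_{τ=1}^{t} K_τ K_τᵀ) P + I)⁻¹. Then ∑_{τ=1}^{t} Δ_τ* = Δ_{total,t}*. -/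
open Matrix BigOperators

noncomputable section

/-!
Write `A s` for the matrix inverted at step `s`. Since `A s = A (s - 1) + K s * (K s)ᵀ * P`, the
rule `Δ s * A s = (V s - W (s - 1) * K s) * (K s)ᵀ * P` says precisely that `W s * A s` exceeds
`W (s - 1) * A (s - 1)` by `V s * (K s)ᵀ * P`, which no longer involves `W`. So `W * A` telescopes,
as do `W` and `A`, and `(W t - W 0) * A t = (W t * A t - W 0 * A 0) - W 0 * (A t - A 0)`.
-/

namespace SequentialEditing

theorem sum_Icc_one_eq_sub {M : Type*} [AddCommGroup M] {f g : ℕ → M} {t : ℕ}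
    (hf : ∀ s, 1 ≤ s → s ≤ t → f s = f (s - 1) + g s) :
    ∑ s ∈ Finset.Icc 1 t, g s = f t - f 0 := by
  induction t with
  | zero => simp
  | succ t ih =>
    have hsum := ih fun s h1 hs => hf s h1 (hs.trans t.le_succ)
    have hlast : f (t + 1) = f t + g (t + 1) := hf (t + 1) t.succ_pos le_rfl
    rw [Finset.sum_Icc_succ_top t.succ_pos, hsum, hlast, sub_add_eq_add_sub]

section NonUnitalRing

variable {R ι κ : Type*} [NonUnitalRing R] [Fintype κ]

theorem add_mul_eq_of_mul_eq_residual_mul {μ : Type*} [Fintype μ]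
    {W D : Matrix ι κ R} {A A' : Matrix κ κ R}
    {K : Matrix κ μ R} {L : Matrix μ κ R} {V : Matrix ι μ R}
    (hA : A' = A + K * L) (hD : D * A' = (V - W * K) * L) :
    (W + D) * A' = W * A + V * L := by
  rw [Matrix.add_mul, hD, hA, Matrix.mul_add, Matrix.sub_mul, Matrix.mul_assoc]
  abel

theorem sum_update_mul_eq_sum_residual_mul {m : ℕ → Type*} [∀ τ, Fintype (m τ)] {t : ℕ}
    {W Δ : ℕ → Matrix ι κ R} {A : ℕ → Matrix κ κ R}
    {K : (τ : ℕ) → Matrix κ (m τ) R} {L : (τ : ℕ) → Matrix (m τ) κ R}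
    {V : (τ : ℕ) → Matrix ι (m τ) R}
    (hA : ∀ s, 1 ≤ s → s ≤ t → A s = A (s - 1) + K s * L s)
    (hΔ : ∀ s, 1 ≤ s → s ≤ t → Δ s * A s = (V s - W (s - 1) * K s) * L s)
    (hW : ∀ s, 1 ≤ s → s ≤ t → W s = W (s - 1) + Δ s) :
    (∑ τ ∈ Finset.Icc 1 t, Δ τ) * A t =
      ∑ τ ∈ Finset.Icc 1 t, (V τ - W 0 * K τ) * L τ := by
  have hWA : ∑ τ ∈ Finset.Icc 1 t, V τ * L τ = W t * A t - W 0 * A 0 :=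
    sum_Icc_one_eq_sub (f := fun s => W s * A s) fun s h1 hs => by
      simpa only [← hW s h1 hs] using
        add_mul_eq_of_mul_eq_residual_mul (hA s h1 hs) (hΔ s h1 hs)
  calc (∑ τ ∈ Finset.Icc 1 t, Δ τ) * A t
      = (W t - W 0) * A t := by rw [sum_Icc_one_eq_sub hW]
    _ = (W t * A t - W 0 * A 0) - W 0 * (A t - A 0) := by
        rw [Matrix.sub_mul, Matrix.mul_sub, sub_sub_sub_cancel_right]
    _ = ∑ τ ∈ Finset.Icc 1 t, V τ * L τ - W 0 * ∑ τ ∈ Finset.Icc 1 t, K τ * L τ := by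
        rw [hWA, sum_Icc_one_eq_sub hA]
    _ = ∑ τ ∈ Finset.Icc 1 t, (V τ - W 0 * K τ) * L τ := by
        simp only [Matrix.sub_mul, Matrix.mul_sum, Matrix.mul_assoc, Finset.sum_sub_distrib]

end NonUnitalRing

end SequentialEditing

/-- `L τ` plays the role of `(K τ)ᵀ * P`, and `Λ` that of the regularizer `1`. -/
theorem alphaedit_ote_se_equivalence_general {R ι κ : Type*} [CommRing R] [Fintype κ]
    [DecidableEq κ] {m : ℕ → Type*} [∀ τ, Fintype (m τ)] {t : ℕ} (Λ : Matrix κ κ R)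
    (K : (τ : ℕ) → Matrix κ (m τ) R) (L : (τ : ℕ) → Matrix (m τ) κ R)
    (V : (τ : ℕ) → Matrix ι (m τ) R)
    (hinv : ∀ s, 1 ≤ s → s ≤ t → IsUnit (∑ τ ∈ Finset.Icc 1 s, K τ * L τ + Λ))
    (W Δ : ℕ → Matrix ι κ R)
    (hΔ : ∀ s, 1 ≤ s → s ≤ t →
      Δ s = (V s - W (s - 1) * K s) * L s * (∑ τ ∈ Finset.Icc 1 s, K τ * L τ + Λ)⁻¹)
    (hW : ∀ s, 1 ≤ s → s ≤ t → W s = W (s - 1) + Δ s) :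
    ∑ τ ∈ Finset.Icc 1 t, Δ τ =
      (∑ τ ∈ Finset.Icc 1 t, (V τ - W 0 * K τ) * L τ) *
        (∑ τ ∈ Finset.Icc 1 t, K τ * L τ + Λ)⁻¹ := by
  let A (s : ℕ) : Matrix κ κ R := ∑ τ ∈ Finset.Icc 1 s, K τ * L τ + Λ
  have hdet (s : ℕ) (h1 : 1 ≤ s) (hs : s ≤ t) : IsUnit (A s).det :=
    (Matrix.isUnit_iff_isUnit_det _).1 (hinv s h1 hs)
  have hA (s : ℕ) (h1 : 1 ≤ s) (_ : s ≤ t) : A s = A (s - 1) + K s * L s := by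
    obtain ⟨s, rfl⟩ := Nat.exists_eq_add_of_le' h1
    simp only [A, Finset.sum_Icc_succ_top h1, Nat.add_sub_cancel, add_right_comm]
  have hΔA (s : ℕ) (h1 : 1 ≤ s) (hs : s ≤ t) :
      Δ s * A s = (V s - W (s - 1) * K s) * L s := by
    rw [hΔ s h1 hs, Matrix.nonsing_inv_mul_cancel_right _ _ (hdet s h1 hs)]
  obtain rfl | ht := t.eq_zero_or_pos
  · simp
  · rw [← SequentialEditing.sum_update_mul_eq_sum_residual_mul hA hΔA hW,
      Matrix.mul_nonsing_inv_cancel_right _ _ (hdet t ht le_rfl)]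

theorem alphaedit_ote_se_equivalence
    {dOut dIn : ℕ} (t : ℕ) {m : ℕ → ℕ}
    (W₀ : Matrix (Fin dOut) (Fin dIn) ℝ)
    (P : Matrix (Fin dIn) (Fin dIn) ℝ)
    (K : (τ : ℕ) → Matrix (Fin dIn) (Fin (m τ)) ℝ)
    (V : (τ : ℕ) → Matrix (Fin dOut) (Fin (m τ)) ℝ)
    (hinv : ∀ s, 1 ≤ s → s ≤ t →
      Invertible ((∑ τ ∈ Finset.Icc 1 s, K τ * (K τ)ᵀ) * P + 1))
    (W Δ : ℕ → Matrix (Fin dOut) (Fin dIn) ℝ)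
    (hW₀ : W 0 = W₀)
    (hΔ : ∀ s, 1 ≤ s → s ≤ t →
      Δ s = (V s - W (s - 1) * K s) * (K s)ᵀ * P *
        ((∑ τ ∈ Finset.Icc 1 s, K τ * (K τ)ᵀ) * P + 1)⁻¹)
    (hW : ∀ s, 1 ≤ s → s ≤ t → W s = W (s - 1) + Δ s) :
    ∑ τ ∈ Finset.Icc 1 t, Δ τ =
      (∑ τ ∈ Finset.Icc 1 t, (V τ - W₀ * K τ) * (K τ)ᵀ) * P *
        ((∑ τ ∈ Finset.Icc 1 t, K τ * (K τ)ᵀ) * P + 1)⁻¹ := by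
  have hunit s h1 hs := @isUnit_of_invertible _ _ _ (hinv s h1 hs)
  simp only [← hW₀, Matrix.sum_mul _ _ P, Matrix.mul_assoc _ _ P] at hunit hΔ ⊢
  exact alphaedit_ote_se_equivalence_general 1 K (fun τ => (K τ)ᵀ * P) V hunit W Δ hΔ hW
end
end

section
/- Fix W₀ ∈ ℝ^{d_o×d_i}, an arbitrary matrix P ∈ ℝ^{d_i×d_i}, a scalar λ ≥ 0, a preserved-knowledge key matrix K₀ ∈ ℝ^{d_i×m₀}, and for each step τ = 1, …, t matrices K_τ ∈ ℝ^{d_i×m_τ} and V_τ ∈ ℝ^{d_o×m_τ}. Assume for every s with 1 ≤ s ≤ t that the matrix K₀K₀ᵀ P + (∑_{τ=1}^{s} K_τ K_τᵀ) P + λI is invertible. Define sequential updates recursively by W_s = W_{s−1} + Δ_s* where Δ_s* := (V_s − W_{s−1} K_s) K_sᵀ P (K₀K₀ᵀ P + (∑_{τ=1}^{s} K_τ K_τᵀ) P + λI)⁻¹. Let R′_τ := V_τ − W₀ K_τ and define the batch update Δ_{total,t}* := (∑_{τ=1}^{t} R′_τ K_τᵀ P) (K₀K₀ᵀ P + (∑_{τ=1}^{t}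 K_τ K_τᵀ) P + λI)⁻¹. Then ∑_{τ=1}^{t} Δ_τ* = Δ_{total,t}*. -/
open Matrix BigOperators

noncomputable section

/-!
Write `A s` for the regularized Gram matrix of step `s`, so that `A s = A (s - 1) + K s * L s` with
`L s = (K s)ᵀ * P`. Multiplying the update of step `s` by `A s` turns it into
`W s * A s = W (s - 1) * A (s - 1) + V s * L s`, where the added term no longer involves the current
weights. Telescoping gives `(W t - W 0) * A t = ∑ τ, (V τ - W 0 * K τ) * L τ`, the normal equation
of the batch update.
-/

theorem sum_Icc_one_sub_pred {G : Type*} [AddCommGroup G] (f : ℕ → G) (t : ℕ) :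
    ∑ s ∈ Finset.Icc 1 t, (f s - f (s - 1)) = f t - f 0 := by
  induction t with
  | zero => simp
  | succ t ih =>
    rw [Finset.sum_Icc_succ_top (by lia), ih, Nat.add_sub_cancel, sub_add_sub_cancel']

section NormalEquation

variable {R o n k : Type*} {m : ℕ → Type*} [Fintype n] [Fintype k] [∀ τ, Fintype (m τ)]

theorem mul_add_mul_eq_of_update [NonUnitalRing R] {W W' : Matrix o n R} {A : Matrix n n R}
    {K : Matrix n k R} {L : Matrix k n R} {V : Matrix o k R}
    (h : (W' - W) * (A + K * L) = (V - W * K) * L) :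
    W' * (A + K * L) = W * A + V * L := by
  rw [Matrix.sub_mul, Matrix.sub_mul, sub_eq_iff_eq_add] at h
  rw [h, Matrix.mul_add, Matrix.mul_assoc W K L]
  abel

theorem sub_mul_eq_sum_of_update [NonUnitalRing R] {t : ℕ}
    {W : ℕ → Matrix o n R} {A : ℕ → Matrix n n R}
    {K : ∀ τ, Matrix n (m τ) R} {L : ∀ τ, Matrix (m τ) n R} {V : ∀ τ, Matrix o (m τ) R}
    (hA : ∀ s ∈ Finset.Icc 1 t, A s = A (s - 1) + K s * L s)
    (hW : ∀ s ∈ Finset.Icc 1 t, (W s - W (s - 1)) * A s = (V s - W (s - 1) * K s) * L s) :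
    (W t - W 0) * A t = ∑ τ ∈ Finset.Icc 1 t, (V τ - W 0 * K τ) * L τ := by
  have gram_sub : A t - A 0 = ∑ τ ∈ Finset.Icc 1 t, K τ * L τ := by
    rw [← sum_Icc_one_sub_pred]
    exact Finset.sum_congr rfl fun s hs => sub_eq_of_eq_add' (hA s hs)
  have mul_gram_sub : W t * A t - W 0 * A 0 = ∑ τ ∈ Finset.Icc 1 t, V τ * L τ := by
    rw [← sum_Icc_one_sub_pred fun s => W s * A s]
    refine Finset.sum_congr rfl fun s hs => sub_eq_of_eq_add' ?_
    have update := hW s hs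
    rw [hA s hs] at update ⊢
    exact mul_add_mul_eq_of_update update
  calc (W t - W 0) * A t = (W t * A t - W 0 * A 0) - W 0 * (A t - A 0) := by
        rw [Matrix.sub_mul, Matrix.mul_sub, sub_sub_sub_cancel_right]
    _ = ∑ τ ∈ Finset.Icc 1 t, (V τ - W 0 * K τ) * L τ := by
        simp only [mul_gram_sub, gram_sub, Matrix.mul_sum, Matrix.sub_mul, Matrix.mul_assoc,
          Finset.sum_sub_distrib]

theorem generalized_ote_se_equivalence_general [CommRing R] [DecidableEq n] {t : ℕ}
    {W Δ : ℕ → Matrix o n R} {A : ℕ → Matrix n n R}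
    {K : ∀ τ, Matrix n (m τ) R} {L : ∀ τ, Matrix (m τ) n R} {V : ∀ τ, Matrix o (m τ) R}
    (hA : ∀ s, 1 ≤ s → s ≤ t → A s = A (s - 1) + K s * L s)
    (hinv : ∀ s, 1 ≤ s → s ≤ t → IsUnit (A s))
    (hΔ : ∀ s, 1 ≤ s → s ≤ t → Δ s = (V s - W (s - 1) * K s) * L s * (A s)⁻¹)
    (hW : ∀ s, 1 ≤ s → s ≤ t → W s = W (s - 1) + Δ s) :
    ∑ τ ∈ Finset.Icc 1 t, Δ τ =
      (∑ τ ∈ Finset.Icc 1 t, (V τ - W 0 * K τ) * L τ) * (A t)⁻¹ := by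
  simp only [← and_imp, ← Finset.mem_Icc] at hA hinv hΔ hW
  have hΔW : ∀ s ∈ Finset.Icc 1 t, Δ s = W s - W (s - 1) := fun s hs =>
    eq_sub_of_add_eq' (hW s hs).symm
  have update : ∀ s ∈ Finset.Icc 1 t,
      (W s - W (s - 1)) * A s = (V s - W (s - 1) * K s) * L s := fun s hs => by
    rw [← hΔW s hs, hΔ s hs,
      Matrix.nonsing_inv_mul_cancel_right _ _ ((Matrix.isUnit_iff_isUnit_det _).1 (hinv s hs))]
  obtain rfl | ht := t.eq_zero_or_pos
  · simp
  have det_unit := (Matrix.isUnit_iff_isUnit_det _).1 (hinv t (Finset.right_mem_Icc.2 ht))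
  rw [Finset.sum_congr rfl hΔW, sum_Icc_one_sub_pred, ← sub_mul_eq_sum_of_update hA update,
    Matrix.mul_nonsing_inv_cancel_right _ _ det_unit]

end NormalEquation

section RegularizedGram

variable {R n k : Type*} {m : ℕ → Type*} [Semiring R] [Fintype n] [DecidableEq n] [Fintype k]
  [∀ τ, Fintype (m τ)]

/-- The matrix `K₀K₀ᵀP + (∑_{τ=1}^s K_τK_τᵀ)P + λI` inverted at step `s`; edits are numbered from
`1`, so `s = 0` leaves only the preserved knowledge and the ridge term. -/
def regularizedGram (K₀ : Matrix n k R) (K : ∀ τ, Matrix n (m τ) R) (P : Matrix n n R) (lam : R)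
    (s : ℕ) : Matrix n n R :=
  K₀ * K₀ᵀ * P + (∑ τ ∈ Finset.Icc 1 s, K τ * (K τ)ᵀ) * P + lam • (1 : Matrix n n R)

theorem regularizedGram_eq_pred_add (K₀ : Matrix n k R) (K : ∀ τ, Matrix n (m τ) R)
    (P : Matrix n n R) (lam : R) {s : ℕ} (hs : 1 ≤ s) :
    regularizedGram K₀ K P lam s =
      regularizedGram K₀ K P lam (s - 1) + K s * ((K s)ᵀ * P) := by
  obtain ⟨s, rfl⟩ := Nat.exists_eq_add_of_le' hs
  simp only [regularizedGram, Finset.sum_Icc_succ_top hs, Nat.add_sub_cancel, Matrix.add_mul,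
    Matrix.mul_assoc]
  abel

end RegularizedGram

theorem generalized_ote_se_equivalence
    {dOut dIn m₀ : ℕ} (t : ℕ) {m : ℕ → ℕ}
    (W₀ : Matrix (Fin dOut) (Fin dIn) ℝ)
    (P : Matrix (Fin dIn) (Fin dIn) ℝ)
    (lam : ℝ) (hlam : 0 ≤ lam)
    (K₀ : Matrix (Fin dIn) (Fin m₀) ℝ)
    (K : (τ : ℕ) → Matrix (Fin dIn) (Fin (m τ)) ℝ)
    (V : (τ : ℕ) → Matrix (Fin dOut) (Fin (m τ)) ℝ)
    (hinv : ∀ s, 1 ≤ s → s ≤ t →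
      Invertible (K₀ * K₀ᵀ * P + (∑ τ ∈ Finset.Icc 1 s, K τ * (K τ)ᵀ) * P + lam • (1 : Matrix (Fin dIn) (Fin dIn) ℝ)))
    (W Δ : ℕ → Matrix (Fin dOut) (Fin dIn) ℝ)
    (hW₀ : W 0 = W₀)
    (hΔ : ∀ s, 1 ≤ s → s ≤ t →
      Δ s = (V s - W (s - 1) * K s) * (K s)ᵀ * P *
        (K₀ * K₀ᵀ * P + (∑ τ ∈ Finset.Icc 1 s, K τ * (K τ)ᵀ) * P + lam • (1 : Matrix (Fin dIn) (Fin dIn) ℝ))⁻¹)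
    (hW : ∀ s, 1 ≤ s → s ≤ t → W s = W (s - 1) + Δ s) :
    ∑ τ ∈ Finset.Icc 1 t, Δ τ =
      (∑ τ ∈ Finset.Icc 1 t, (V τ - W₀ * K τ) * (K τ)ᵀ) * P *
        (K₀ * K₀ᵀ * P + (∑ τ ∈ Finset.Icc 1 t, K τ * (K τ)ᵀ) * P + lam • (1 : Matrix (Fin dIn) (Fin dIn) ℝ))⁻¹ := by
  simpa only [hW₀, Matrix.sum_mul, Matrix.mul_assoc, regularizedGram] using
    generalized_ote_se_equivalence_general
      (A := regularizedGram K₀ K P lam) (L := fun τ => (K τ)ᵀ * P)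
      (fun s hs _ => regularizedGram_eq_pred_add K₀ K P lam hs)
      (fun s hs hst => @isUnit_of_invertible _ _ _ (hinv s hs hst))
      (fun s hs hst => by rw [hΔ s hs hst, Matrix.mul_assoc _ _ P, regularizedGram]) hW
end
end

section
/- (Sequential MEMIT reconstructs one-time MEMIT.) Fix W₀ ∈ ℝ^{d_o×d_i}, K₀ ∈ ℝ^{d_i×m₀}, and for each step τ = 1, …, t matrices K_τ ∈ ℝ^{d_i×m_τ} and V_τ ∈ ℝ^{d_o×m_τ}. Assume for every s with 1 ≤ s ≤ t that K₀K₀ᵀ + ∑_{τ=1}^{s} K_τ K_τᵀ is invertible. Define sequential updates recursively by W_s = W_{s−1} + Δ_s* where Δ_s* := (V_s − W_{s−1} K_s) K_sᵀ (K₀K₀ᵀ + ∑_{τ=1}^{s} K_τ K_τᵀ)⁻¹. Then ∑_{τ=1}^{t} Δ_τ* = (∑_{τ=1}^{t} (V_τ − W₀ K_τ) K_τᵀ) (K₀K₀ᵀ + ∑_{τ=1}^{t} K_τ K_τᵀ)⁻¹. -/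
open Matrix BigOperators

noncomputable section

/-!
Write `A s` for the accumulated Gram matrix after step `s`. Multiplying the update by `A s` clears
the inverse and gives `W s * A s = W (s - 1) * A (s - 1) + V s * (K s)ᵀ`: all dependence on the
intermediate weights cancels. Summing over the steps, `W t` solves the same linear system
`X * A t = W 0 * A 0 + ∑ τ, V τ * (K τ)ᵀ` as the weights edited once with all the knowledge.
-/

theorem sum_Icc_one_eq_sub {M : Type*} [AddCommGroup M] {f g : ℕ → M} {t : ℕ}
    (h : ∀ s < t, g (s + 1) = f (s + 1) - f s) :
    ∑ τ ∈ Finset.Icc 1 t, g τ = f t - f 0 := by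
  rw [← Finset.sum_range_sub, Finset.range_eq_Ico, ← Finset.Ico_add_one_right_eq_Icc,
    ← Finset.sum_Ico_add' g 0 t 1]
  exact Finset.sum_congr rfl fun s hs => h s (Finset.mem_Ico.mp hs).2

section Update

variable {R o i : Type*} [CommRing R] [Fintype i] [DecidableEq i]

theorem add_update_mul_gram {k : Type*} [Fintype k] {A : Matrix i i R} {K : Matrix i k R}
    {L : Matrix k i R} (W : Matrix o i R) (V : Matrix o k R) (hA : IsUnit (A + K * L)) :
    (W + (V - W * K) * L * (A + K * L)⁻¹) * (A + K * L) = W * A + V * L := by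
  rw [Matrix.add_mul, nonsing_inv_mul_cancel_right _ _ ((isUnit_iff_isUnit_det _).mp hA),
    Matrix.mul_add, Matrix.sub_mul, Matrix.mul_assoc W K L]
  abel

end Update

section Sequence

variable {R o i : Type*} {k : ℕ → Type*} [∀ τ, Fintype (k τ)]

/-- The Gram matrix accumulated after `s` editing steps, from the initial matrix `C`. MEMIT is the
case `C = K₀ * K₀ᵀ`, `L τ = (K τ)ᵀ`; leaving `C` and the right factors `L τ` free also allows a
regularization term in `C` and a projection in `L τ`. -/
def accumulatedGram [NonUnitalNonAssocSemiring R] (C : Matrix i i R) (K : ∀ τ, Matrix i (k τ) R)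
    (L : ∀ τ, Matrix (k τ) i R) (s : ℕ) : Matrix i i R :=
  C + ∑ τ ∈ Finset.Icc 1 s, K τ * L τ

variable {C : Matrix i i R} {K : ∀ τ, Matrix i (k τ) R} {L : ∀ τ, Matrix (k τ) i R}

theorem accumulatedGram_zero [NonUnitalNonAssocSemiring R] : accumulatedGram C K L 0 = C := by
  simp [accumulatedGram]

theorem accumulatedGram_succ [NonUnitalNonAssocSemiring R] (s : ℕ) :
    accumulatedGram C K L (s + 1) = accumulatedGram C K L s + K (s + 1) * L (s + 1) := by
  rw [accumulatedGram, Finset.sum_Icc_succ_top (Nat.le_add_left 1 s), ← add_assoc, accumulatedGram]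

theorem sum_residual_mul [NonUnitalRing R] [Fintype i] (W : Matrix o i R)
    (V : ∀ τ, Matrix o (k τ) R) (t : ℕ) :
    ∑ τ ∈ Finset.Icc 1 t, (V τ - W * K τ) * L τ =
      ∑ τ ∈ Finset.Icc 1 t, V τ * L τ - W * (accumulatedGram C K L t - C) := by
  simp only [accumulatedGram, add_sub_cancel_left, Matrix.mul_sum, Matrix.sub_mul,
    Matrix.mul_assoc, Finset.sum_sub_distrib]

variable [CommRing R] [Fintype i] [DecidableEq i] {V : ∀ τ, Matrix o (k τ) R}
  {W Δ : ℕ → Matrix o i R} {t : ℕ}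

theorem sum_mul_eq_sub_of_sequential_update
    (hunit : ∀ s < t, IsUnit (accumulatedGram C K L (s + 1)))
    (hΔ : ∀ s < t, Δ (s + 1) =
      (V (s + 1) - W s * K (s + 1)) * L (s + 1) * (accumulatedGram C K L (s + 1))⁻¹)
    (hW : ∀ s < t, W (s + 1) = W s + Δ (s + 1)) :
    ∑ τ ∈ Finset.Icc 1 t, V τ * L τ = W t * accumulatedGram C K L t - W 0 * C := by
  rw [sum_Icc_one_eq_sub (f := fun s => W s * accumulatedGram C K L s), accumulatedGram_zero]
  intro s hs
  have hA := hunit s hs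
  rw [accumulatedGram_succ] at hA
  rw [hW s hs, hΔ s hs, accumulatedGram_succ, add_update_mul_gram _ _ hA, add_sub_cancel_left]

theorem sequential_memit_reconstructs_one_time_memit_general
    (hunit : ∀ s < t, IsUnit (accumulatedGram C K L (s + 1)))
    (hΔ : ∀ s < t, Δ (s + 1) =
      (V (s + 1) - W s * K (s + 1)) * L (s + 1) * (accumulatedGram C K L (s + 1))⁻¹)
    (hW : ∀ s < t, W (s + 1) = W s + Δ (s + 1)) :
    ∑ τ ∈ Finset.Icc 1 t, Δ τ =
      (∑ τ ∈ Finset.Icc 1 t, (V τ - W 0 * K τ) * L τ) * (accumulatedGram C K L t)⁻¹ := by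
  obtain rfl | ht := t.eq_zero_or_pos
  · simp
  have hdet : IsUnit (accumulatedGram C K L t).det := by
    rw [← isUnit_iff_isUnit_det, ← Nat.sub_add_cancel ht]
    exact hunit (t - 1) (Nat.sub_one_lt_of_lt ht)
  have hsum : ∑ τ ∈ Finset.Icc 1 t, Δ τ = W t - W 0 :=
    sum_Icc_one_eq_sub fun s hs => by rw [hW s hs, add_sub_cancel_left]
  have hresidual : ∑ τ ∈ Finset.Icc 1 t, (V τ - W 0 * K τ) * L τ =
      (W t - W 0) * accumulatedGram C K L t := by
    rw [sum_residual_mul (C := C), sum_mul_eq_sub_of_sequential_update hunit hΔ hW,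
      Matrix.mul_sub, Matrix.sub_mul, sub_sub_sub_cancel_right]
  rw [hsum, hresidual, mul_nonsing_inv_cancel_right _ _ hdet]

end Sequence

theorem sequential_memit_reconstructs_one_time_memit
    {dOut dIn m₀ : ℕ} (t : ℕ) {m : ℕ → ℕ}
    (W₀ : Matrix (Fin dOut) (Fin dIn) ℝ)
    (K₀ : Matrix (Fin dIn) (Fin m₀) ℝ)
    (K : (τ : ℕ) → Matrix (Fin dIn) (Fin (m τ)) ℝ)
    (V : (τ : ℕ) → Matrix (Fin dOut) (Fin (m τ)) ℝ)
    (hinv : ∀ s, 1 ≤ s → s ≤ t →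
      Invertible (K₀ * K₀ᵀ + ∑ τ ∈ Finset.Icc 1 s, K τ * (K τ)ᵀ))
    (W Δ : ℕ → Matrix (Fin dOut) (Fin dIn) ℝ)
    (hW₀ : W 0 = W₀)
    (hΔ : ∀ s, 1 ≤ s → s ≤ t →
      Δ s = (V s - W (s - 1) * K s) * (K s)ᵀ *
        (K₀ * K₀ᵀ + ∑ τ ∈ Finset.Icc 1 s, K τ * (K τ)ᵀ)⁻¹)
    (hW : ∀ s, 1 ≤ s → s ≤ t → W s = W (s - 1) + Δ s) :
    ∑ τ ∈ Finset.Icc 1 t, Δ τ =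
      (∑ τ ∈ Finset.Icc 1 t, (V τ - W₀ * K τ) * (K τ)ᵀ) *
        (K₀ * K₀ᵀ + ∑ τ ∈ Finset.Icc 1 t, K τ * (K τ)ᵀ)⁻¹ := by
  subst hW₀
  exact sequential_memit_reconstructs_one_time_memit_general
    (fun s hs => @isUnit_of_invertible _ _ _ (hinv (s + 1) s.succ_pos hs))
    (fun s hs => hΔ (s + 1) s.succ_pos hs) (fun s hs => hW (s + 1) s.succ_pos hs)
end
end

section
/- (Error correction restores equivalence to one-time editing under post-processing regularization.) Fix W₀ ∈ ℝ^{d_o×d_i}, K₀ ∈ ℝ^{d_i×m₀} with V₀ := W₀K₀, key–value matrices K_τ ∈ ℝ^{d_i×m_τ}, V_τ ∈ ℝ^{d_o×m_τ} for τ = 1, …, T, and an arbitrary map ℛ_p : ℝ^{d_o×d_i} → ℝ^{d_o×d_i}. Define C_t := K₀K₀ᵀ + ∑_{τ=1}^{t} K_τK_τᵀ and assume C_t is invertible for all 1 ≤ t ≤ T. Define recursively E₀ := 0, W₀^ℛ := W₀, and for t ≥ 1: Δ_t := ((V_t − W_{t−1}^ℛ K_t)K_tᵀ − E_{t−1}) C_t⁻¹,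 W_t^ℛ := W_{t−1}^ℛ + ℛ_p(Δ_t), E_t := (ℛ_p(Δ_t) − Δ_t) C_t. Define the one-time editing update Δ_{total,t} := (∑_{τ=1}^{t} (V_τ − W₀K_τ)K_τᵀ) C_t⁻¹. Then for every t with 1 ≤ t ≤ T, W_{t−1}^ℛ + Δ_t = W₀ + Δ_{total,t}. -/
open Matrix BigOperators

noncomputable section

/-!
Measure the deviation `W - W₀` from the original weights in the normal-equation form
`(W - W₀) * C`. Applying a post-processed update `U` instead of the computed `Δ` shifts this
quantity by exactly the error `E = (U - Δ) * C`, so `(W - W₀) * C - E` does not depend on `U`: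
each edit adds to it the residual `(V - W₀ * K) * Kᵀ` of its own keys against the *original*
weights. The next computed update subtracts the stored error, and hence solves the normal equation
of editing everything at once.
-/

section Step

variable {R o i k : Type*} [NonUnitalRing R] [Fintype i] [Fintype k]

theorem add_sub_mul_gram_eq_add_residual
    {W₀ W Δ E : Matrix o i R} {C C' : Matrix i i R}
    {K : Matrix i k R} {L : Matrix k i R} {V : Matrix o k R}
    (hC : C' = C + K * L) (hΔ : Δ * C' = (V - W * K) * L - E) :
    (W + Δ - W₀) * C' = ((W - W₀) * C - E) + (V - W₀ * K) * L :=
  calc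
    (W + Δ - W₀) * C' = (W - W₀) * (C + K * L) + Δ * C' := by
      rw [add_sub_right_comm, Matrix.add_mul, ← hC]
    _ = ((W - W₀) * C - E) + (V - W₀ * K) * L := by
      rw [hΔ]
      simp only [Matrix.sub_mul, Matrix.mul_add, Matrix.mul_assoc]
      abel

end Step

section Sequence

variable {R o i : Type*} {k : ℕ → Type*} [Fintype i] [∀ τ, Fintype (k τ)]

theorem sub_mul_gram_sub_error_eq_sum_residual [NonUnitalRing R] {T : ℕ}
    {K : (τ : ℕ) → Matrix i (k τ) R} {L : (τ : ℕ) → Matrix (k τ) i R}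
    {V : (τ : ℕ) → Matrix o (k τ) R} {C : ℕ → Matrix i i R} {W Δ U E : ℕ → Matrix o i R}
    (hC : ∀ t < T, C (t + 1) = C t + K (t + 1) * L (t + 1))
    (hE₀ : E 0 = 0)
    (hΔ : ∀ t < T, Δ (t + 1) * C (t + 1) = (V (t + 1) - W t * K (t + 1)) * L (t + 1) - E t)
    (hW : ∀ t < T, W (t + 1) = W t + U (t + 1))
    (hE : ∀ t < T, E (t + 1) = (U (t + 1) - Δ (t + 1)) * C (t + 1)) :
    ∀ t ≤ T, (W t - W 0) * C t - E t = ∑ τ ∈ Finset.Icc 1 t, (V τ - W 0 * K τ) * L τ := by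
  intro t ht
  induction t with
  | zero => simp [hE₀]
  | succ t ih =>
    have update_cancels : W t + U (t + 1) - W 0 - (U (t + 1) - Δ (t + 1)) =
        W t + Δ (t + 1) - W 0 := by abel
    calc
      (W (t + 1) - W 0) * C (t + 1) - E (t + 1)
          = (W t + Δ (t + 1) - W 0) * C (t + 1) := by
        rw [hW t ht, hE t ht, ← Matrix.sub_mul, update_cancels]
      _ = ((W t - W 0) * C t - E t) + (V (t + 1) - W 0 * K (t + 1)) * L (t + 1) :=
        add_sub_mul_gram_eq_add_residual (hC t ht) (hΔ t ht)
      _ = ∑ τ ∈ Finset.Icc 1 (t + 1), (V τ - W 0 * K τ) * L τ := by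
        rw [ih (Nat.le_of_succ_le ht), Finset.sum_Icc_succ_top (Nat.le_add_left 1 t)]

/-- The paper's setting is `U t = ℛ_p(Δ_t)`, `L τ = K_τᵀ` and `C₀ = K₀K₀ᵀ`. -/
theorem error_correction_restores_ote_equivalence_general [CommRing R] [DecidableEq i] {T : ℕ}
    {W₀ : Matrix o i R} {C₀ : Matrix i i R}
    {K : (τ : ℕ) → Matrix i (k τ) R} {L : (τ : ℕ) → Matrix (k τ) i R}
    {V : (τ : ℕ) → Matrix o (k τ) R} {C : ℕ → Matrix i i R} {W Δ U E : ℕ → Matrix o i R}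
    (hC : ∀ t, C t = C₀ + ∑ τ ∈ Finset.Icc 1 t, K τ * L τ)
    (hC_det : ∀ t, 1 ≤ t → t ≤ T → IsUnit (C t).det)
    (hE₀ : E 0 = 0)
    (hW₀ : W 0 = W₀)
    (hΔ : ∀ t, 1 ≤ t → t ≤ T →
      Δ t = ((V t - W (t - 1) * K t) * L t - E (t - 1)) * (C t)⁻¹)
    (hW : ∀ t, 1 ≤ t → t ≤ T → W t = W (t - 1) + U t)
    (hE : ∀ t, 1 ≤ t → t ≤ T → E t = (U t - Δ t) * C t) :
    ∀ t, 1 ≤ t → t ≤ T →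
      W (t - 1) + Δ t =
        W₀ + (∑ τ ∈ Finset.Icc 1 t, (V τ - W₀ * K τ) * L τ) * (C t)⁻¹ := by
  subst hW₀
  intro t ht_pos htT
  obtain ⟨t, rfl⟩ := Nat.exists_eq_add_of_le' ht_pos
  rw [Nat.add_sub_cancel]
  have hC_succ : ∀ s, C (s + 1) = C s + K (s + 1) * L (s + 1) := fun s => by
    rw [hC, hC, Finset.sum_Icc_succ_top (Nat.le_add_left 1 s), add_assoc]
  have hΔ_mul : ∀ s < T,
      Δ (s + 1) * C (s + 1) = (V (s + 1) - W s * K (s + 1)) * L (s + 1) - E s := fun s hs => by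
    rw [hΔ (s + 1) s.succ_pos hs, Nat.add_sub_cancel,
      Matrix.nonsing_inv_mul_cancel_right _ _ (hC_det (s + 1) s.succ_pos hs)]
  have accumulated : (W t - W 0) * C t - E t = ∑ τ ∈ Finset.Icc 1 t, (V τ - W 0 * K τ) * L τ :=
    sub_mul_gram_sub_error_eq_sum_residual (fun s _ => hC_succ s) hE₀ hΔ_mul
      (fun s => hW (s + 1) s.succ_pos) (fun s => hE (s + 1) s.succ_pos) t (Nat.le_of_succ_le htT)
  have normal_equation : (W t + Δ (t + 1) - W 0) * C (t + 1) =
      ∑ τ ∈ Finset.Icc 1 (t + 1), (V τ - W 0 * K τ) * L τ := by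
    rw [add_sub_mul_gram_eq_add_residual (hC_succ t) (hΔ_mul t htT), accumulated,
      Finset.sum_Icc_succ_top (Nat.le_add_left 1 t)]
  rw [← normal_equation,
    Matrix.mul_nonsing_inv_cancel_right _ _ (hC_det (t + 1) ht_pos htT), add_sub_cancel]

end Sequence

theorem error_correction_restores_ote_equivalence
    {dOut dIn m₀ : ℕ} (T : ℕ) {m : ℕ → ℕ}
    (W₀ : Matrix (Fin dOut) (Fin dIn) ℝ)
    (K₀ : Matrix (Fin dIn) (Fin m₀) ℝ)
    (K : (τ : ℕ) → Matrix (Fin dIn) (Fin (m τ)) ℝ)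
    (V : (τ : ℕ) → Matrix (Fin dOut) (Fin (m τ)) ℝ)
    (Rp : Matrix (Fin dOut) (Fin dIn) ℝ → Matrix (Fin dOut) (Fin dIn) ℝ)
    (C : ℕ → Matrix (Fin dIn) (Fin dIn) ℝ)
    (hC : ∀ t : ℕ, C t = K₀ * K₀ᵀ + ∑ τ ∈ Finset.Icc 1 t, K τ * (K τ)ᵀ)
    (hCinv : ∀ t, 1 ≤ t → t ≤ T → Invertible (C t))
    (WR Δ Err : ℕ → Matrix (Fin dOut) (Fin dIn) ℝ)
    (hE₀ : Err 0 = 0)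
    (hWR₀ : WR 0 = W₀)
    (hΔ : ∀ t, 1 ≤ t → t ≤ T →
      Δ t = ((V t - WR (t - 1) * K t) * (K t)ᵀ - Err (t - 1)) * (C t)⁻¹)
    (hWR : ∀ t, 1 ≤ t → t ≤ T → WR t = WR (t - 1) + Rp (Δ t))
    (hErr : ∀ t, 1 ≤ t → t ≤ T → Err t = (Rp (Δ t) - Δ t) * C t) :
    ∀ t, 1 ≤ t → t ≤ T →
      WR (t - 1) + Δ t =
        W₀ + (∑ τ ∈ Finset.Icc 1 t, (V τ - W₀ * K τ) * (K τ)ᵀ) * (C t)⁻¹ :=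
  error_correction_restores_ote_equivalence_general (L := fun τ => (K τ)ᵀ) (U := fun t => Rp (Δ t))
    hC (fun t ht_pos htT => letI := hCinv t ht_pos htT; isUnit_det_of_invertible (C t))
    hE₀ hWR₀ hΔ hWR hErr
end
end

section
/- (The error-correction term equals the negative cumulative residual.) Under the recursive definitions E₀ := 0, W₀^ℛ := W₀, Δ_t := ((V_t − W_{t−1}^ℛ K_t)K_tᵀ − E_{t−1}) C_t⁻¹, W_t^ℛ := W_{t−1}^ℛ + ℛ_p(Δ_t), E_t := (ℛ_p(Δ_t) − Δ_t) C_t, with C_t := K₀K₀ᵀ + ∑_{τ=1}^{t} K_τK_τᵀ invertible for all t, V₀ := W₀K₀, and ℛ_p : ℝ^{d_o×d_i} → ℝ^{d_o×d_i} arbitrary, it holds for every t ≥ 1 that E_{t−1} = −∑_{τ=0}^{t−1} (V_τ − W_{t−1}^ℛ K_τ) K_τᵀ; equivalently, Δ_t satisfies the cumulative normal equation Δ_t C_t = ∑_{τ=0}^{t} (V_τ − W_{t−1}^ℛ K_τ) K_τᵀ. -/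
open Matrix BigOperators

noncomputable section

/-!
For fixed keys and values the cumulative residual is an affine function of the weights, with linear
part right multiplication by minus the Gram matrix of the keys. If `Δ` solves the normal equation
at `W`, the residual at `W + Δ` vanishes, so applying `U` instead of `Δ` leaves the residual
`-(U - Δ) * C` behind. This is minus the recorded error term, and subtracting that term from the
next single-step residual restores the full cumulative right-hand side.
-/

section CumulativeResidual

variable {R ι o i : Type*} {k : ι → Type*} [NonUnitalRing R] [∀ τ, Fintype (k τ)]

/-- The Gram matrix `∑ K_τ K_τᵀ` of the keys with index in `s`; the regularization matrix `C_t` of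
the editing scheme is the case `s = {0, …, t}`. -/
def keyGram (K : (τ : ι) → Matrix i (k τ) R) (s : Finset ι) : Matrix i i R :=
  ∑ τ ∈ s, K τ * (K τ)ᵀ

variable [Fintype i]

/-- The residual `∑ (V_τ - W K_τ) K_τᵀ` of the weights `W` on the key–value pairs with index
in `s`: up to a factor, the negative gradient of the least-squares loss `∑ ‖W K_τ - V_τ‖²`. -/
def cumulativeResidual (K : (τ : ι) → Matrix i (k τ) R) (V : (τ : ι) → Matrix o (k τ) R)
    (W : Matrix o i R) (s : Finset ι) : Matrix o i R :=
  ∑ τ ∈ s, (V τ - W * K τ) * (K τ)ᵀ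

variable (K : (τ : ι) → Matrix i (k τ) R) (V : (τ : ι) → Matrix o (k τ) R)

theorem cumulativeResidual_add_weight (W U : Matrix o i R) (s : Finset ι) :
    cumulativeResidual K V (W + U) s = cumulativeResidual K V W s - U * keyGram K s := by
  simp only [cumulativeResidual, keyGram, Matrix.mul_sum, ← Finset.sum_sub_distrib,
    Matrix.add_mul, Matrix.sub_mul, Matrix.mul_assoc, sub_add_eq_sub_sub]

variable {K V}

theorem sub_mul_keyGram_eq_neg_cumulativeResidual {W Δ : Matrix o i R} {s : Finset ι}
    (hΔ : Δ * keyGram K s = cumulativeResidual K V W s) (U : Matrix o i R) :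
    (U - Δ) * keyGram K s = -cumulativeResidual K V (W + U) s := by
  rw [Matrix.sub_mul, hΔ, cumulativeResidual_add_weight, neg_sub]

end CumulativeResidual

section SequentialEditing

variable {R o i : Type*} {k : ℕ → Type*} [CommRing R] [Fintype i] [DecidableEq i]
  [∀ τ, Fintype (k τ)] {K : (τ : ℕ) → Matrix i (k τ) R} {V : (τ : ℕ) → Matrix o (k τ) R}

theorem corrected_update_mul_eq_cumulativeResidual {W E : Matrix o i R} {C : Matrix i i R} {t : ℕ}
    (hC : IsUnit C) (hE : E = -cumulativeResidual K V W (Finset.range t)) :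
    ((V t - W * K t) * (K t)ᵀ - E) * C⁻¹ * C =
      cumulativeResidual K V W (Finset.range (t + 1)) := by
  rw [Matrix.nonsing_inv_mul_cancel_right _ _ ((Matrix.isUnit_iff_isUnit_det C).1 hC), hE,
    sub_neg_eq_add, add_comm, cumulativeResidual, cumulativeResidual, Finset.sum_range_succ]

-- `U t` plays the role of the applied update `ℛ_p(Δ_t)`.
theorem error_correction_equals_negative_cumulative_residual_general
    {C : ℕ → Matrix i i R} {W Δ U Err : ℕ → Matrix o i R}
    (hV₀ : V 0 = W 0 * K 0)
    (hC : ∀ t, 1 ≤ t → C t = ∑ τ ∈ Finset.range (t + 1), K τ * (K τ)ᵀ)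
    (hCunit : ∀ t, 1 ≤ t → IsUnit (C t))
    (hE₀ : Err 0 = 0)
    (hΔ : ∀ t, 1 ≤ t →
      Δ t = ((V t - W (t - 1) * K t) * (K t)ᵀ - Err (t - 1)) * (C t)⁻¹)
    (hW : ∀ t, 1 ≤ t → W t = W (t - 1) + U t)
    (hErr : ∀ t, 1 ≤ t → Err t = (U t - Δ t) * C t) :
    ∀ t, 1 ≤ t →
      Err (t - 1) = -∑ τ ∈ Finset.range t, (V τ - W (t - 1) * K τ) * (K τ)ᵀ ∧
      Δ t * C t = ∑ τ ∈ Finset.range (t + 1), (V τ - W (t - 1) * K τ) * (K τ)ᵀ := by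
  have normal_equation (t : ℕ) (ht : 1 ≤ t)
      (hE : Err (t - 1) = -cumulativeResidual K V (W (t - 1)) (Finset.range t)) :
      Δ t * C t = cumulativeResidual K V (W (t - 1)) (Finset.range (t + 1)) := by
    rw [hΔ t ht]
    exact corrected_update_mul_eq_cumulativeResidual (hCunit t ht) hE
  have error_eq (t : ℕ) (ht : 1 ≤ t) :
      Err (t - 1) = -cumulativeResidual K V (W (t - 1)) (Finset.range t) := by
    induction t, ht using Nat.le_induction with
    | base => simp [cumulativeResidual, hE₀, hV₀]
    | succ t ht ih =>
      have hΔC := normal_equation t ht ih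
      rw [Nat.add_sub_cancel, hErr t ht, hW t ht]
      rw [hC t ht] at hΔC ⊢
      exact sub_mul_keyGram_eq_neg_cumulativeResidual hΔC (U t)
  exact fun t ht => ⟨error_eq t ht, normal_equation t ht (error_eq t ht)⟩

end SequentialEditing

theorem error_correction_equals_negative_cumulative_residual
    {dOut dIn : ℕ} {m : ℕ → ℕ}
    (W₀ : Matrix (Fin dOut) (Fin dIn) ℝ)
    (K : (τ : ℕ) → Matrix (Fin dIn) (Fin (m τ)) ℝ)
    (V : (τ : ℕ) → Matrix (Fin dOut) (Fin (m τ)) ℝ)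
    (hV₀ : V 0 = W₀ * K 0)
    (Rp : Matrix (Fin dOut) (Fin dIn) ℝ → Matrix (Fin dOut) (Fin dIn) ℝ)
    (C : ℕ → Matrix (Fin dIn) (Fin dIn) ℝ)
    (hC : ∀ t : ℕ, C t = ∑ τ ∈ Finset.range (t + 1), K τ * (K τ)ᵀ)
    (hCinv : ∀ t, Invertible (C t))
    (WR Δ Err : ℕ → Matrix (Fin dOut) (Fin dIn) ℝ)
    (hE₀ : Err 0 = 0)
    (hWR₀ : WR 0 = W₀)
    (hΔ : ∀ t, 1 ≤ t →
      Δ t = ((V t - WR (t - 1) * K t) * (K t)ᵀ - Err (t - 1)) * (C t)⁻¹)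
    (hWR : ∀ t, 1 ≤ t → WR t = WR (t - 1) + Rp (Δ t))
    (hErr : ∀ t, 1 ≤ t → Err t = (Rp (Δ t) - Δ t) * C t) :
    ∀ t, 1 ≤ t →
      Err (t - 1) = -∑ τ ∈ Finset.range t, (V τ - WR (t - 1) * K τ) * (K τ)ᵀ ∧
      Δ t * C t = ∑ τ ∈ Finset.range (t + 1), (V τ - WR (t - 1) * K τ) * (K τ)ᵀ :=
  error_correction_equals_negative_cumulative_residual_general (hWR₀ ▸ hV₀) (fun t _ => hC t)
    (fun t _ => have := hCinv t; isUnit_of_invertible (C t)) hE₀ hΔ hWR hErr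
end
end
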